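/- For every real k with k < −4 or k > 2, the cubic polynomial f(x) = 4x³ + (k² − 4)x² − 2kx + 1 has three distinct real roots e₁ < e₂ < e₃, and these satisfy |e₁| > 1, |e₂| < 1 and |e₃| < 1 (so the circle |x| = 1 encloses e₂ and e₃ but not e₁). -/

import Mathlib

/-!
Two sign changes suffice: since `f (-1) = (k + 1) ^ 2 - 8 > 0`, `f k⁻¹ = 4 * (1 - k) / k ^ 3 < 0`
and `f 1 = (k - 1) ^ 2 > 0`, there are roots in `(-1, k⁻¹)` and `(k⁻¹, 1)`. Dividing them out leaves
a linear factor of positive slope, which is positive at `-1` because `f (-1) > 0`; so the remaining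
root lies to the left of `-1`.
-/

theorem cubic_eq_linear_mul_of_two_roots {R : Type*} [CommRing R] [NoZeroDivisors R]
    {p q r s b c : R} (hbc : b ≠ c) (hb : p * b ^ 3 + q * b ^ 2 + r * b + s = 0)
    (hc : p * c ^ 3 + q * c ^ 2 + r * c + s = 0) (x : R) :
    p * x ^ 3 + q * x ^ 2 + r * x + s = (p * (x + b + c) + q) * (x - b) * (x - c) := by
  have divided_difference : p * (b ^ 2 + b * c + c ^ 2) + q * (b + c) + r = 0 :=
    (mul_eq_zero.1 (by linear_combination hb - hc)).resolve_left (sub_ne_zero.2 hbc)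
  linear_combination hb + (x - b) * divided_difference

theorem exists_cubic_eq_prod_of_sign_changes {p q r s u m v : ℝ} (hp : 0 < p) (hum : u < m)
    (hmv : m < v) (hu : 0 < p * u ^ 3 + q * u ^ 2 + r * u + s)
    (hm : p * m ^ 3 + q * m ^ 2 + r * m + s < 0) (hv : 0 < p * v ^ 3 + q * v ^ 2 + r * v + s) :
    ∃ a b c : ℝ, a < u ∧ b ∈ Set.Ioo u m ∧ c ∈ Set.Ioo m v ∧
      ∀ x, p * x ^ 3 + q * x ^ 2 + r * x + s = p * (x - a) * (x - b) * (x - c) := by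
  have hcont : Continuous fun x : ℝ => p * x ^ 3 + q * x ^ 2 + r * x + s := by fun_prop
  obtain ⟨b, hb, hb_root⟩ := intermediate_value_Ioo' hum.le hcont.continuousOn ⟨hm, hu⟩
  obtain ⟨c, hc, hc_root⟩ := intermediate_value_Ioo hmv.le hcont.continuousOn ⟨hm, hv⟩
  have factorization (x : ℝ) : p * x ^ 3 + q * x ^ 2 + r * x + s =
      p * (x - (-q / p - b - c)) * (x - b) * (x - c) := by
    rw [cubic_eq_linear_mul_of_two_roots (hb.2.trans hc.1).ne hb_root hc_root x]
    field_simp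
    ring
  refine ⟨-q / p - b - c, b, c, ?_, hb, hc, factorization⟩
  have hub : u - b < 0 := sub_neg.2 hb.1
  have huc : u - c < 0 := sub_neg.2 (hum.trans hc.1)
  rw [factorization, mul_assoc, mul_pos_iff_of_pos_right (mul_pos_of_neg_of_neg hub huc),
    mul_pos_iff_of_pos_left hp] at hu
  exact sub_pos.1 hu

theorem cubic_inv_neg {K : Type*} [Field K] [LinearOrder K] [IsStrictOrderedRing K] {k : K}
    (hk : 1 < |k|) :
    4 * k⁻¹ ^ 3 + (k ^ 2 - 4) * k⁻¹ ^ 2 - 2 * k * k⁻¹ + 1 < 0 := by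
  have hk₀ : k ≠ 0 := abs_pos.1 (one_pos.trans hk)
  have hsq : k < k ^ 2 := by
    rw [← sq_abs]
    nlinarith [le_abs_self k]
  calc 4 * k⁻¹ ^ 3 + (k ^ 2 - 4) * k⁻¹ ^ 2 - 2 * k * k⁻¹ + 1
      = 4 * (k - k ^ 2) / k ^ 4 := by field_simp; ring
    _ < 0 := div_neg_of_neg_of_pos (by linarith) (by positivity)

theorem cubic_three_real_roots_general (k : ℝ) (hk : 8 < (k + 1) ^ 2) :
    ∃ e₁ e₂ e₃ : ℝ, e₁ < e₂ ∧ e₂ < e₃ ∧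
      (∀ x : ℝ, 4 * x ^ 3 + (k ^ 2 - 4) * x ^ 2 - 2 * k * x + 1 =
        4 * (x - e₁) * (x - e₂) * (x - e₃)) ∧
      1 < |e₁| ∧ |e₂| < 1 ∧ |e₃| < 1 := by
  have hk_abs : 1 < |k| := by
    by_contra! h
    nlinarith [abs_le.1 h]
  have hk_one : k ≠ 1 := by
    rintro rfl
    simp at hk_abs
  have f_neg_one_pos : 0 < 4 * (-1) ^ 3 + (k ^ 2 - 4) * (-1) ^ 2 + -2 * k * (-1) + 1 := by
    linarith
  have f_inv_neg : 4 * k⁻¹ ^ 3 + (k ^ 2 - 4) * k⁻¹ ^ 2 + -2 * k * k⁻¹ + 1 < 0 := by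
    linarith [cubic_inv_neg hk_abs]
  have f_one_pos : 0 < 4 * 1 ^ 3 + (k ^ 2 - 4) * 1 ^ 2 + -2 * k * 1 + 1 := by
    linarith [sq_pos_of_ne_zero (sub_ne_zero.2 hk_one)]
  obtain ⟨hinv_left, hinv_right⟩ : -1 < k⁻¹ ∧ k⁻¹ < 1 :=
    abs_lt.1 (abs_inv k ▸ inv_lt_one_of_one_lt₀ hk_abs)
  obtain ⟨a, b, c, ha, hb, hc, factorization⟩ :=
    exists_cubic_eq_prod_of_sign_changes four_pos hinv_left hinv_right f_neg_one_pos f_inv_neg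
      f_one_pos
  exact ⟨a, b, c, ha.trans hb.1, hb.2.trans hc.1, fun x => by linear_combination factorization x,
    lt_abs.2 (Or.inr (lt_neg_of_lt_neg ha)), abs_lt.2 ⟨hb.1, hb.2.trans hinv_right⟩,
    abs_lt.2 ⟨hinv_left.trans hc.1, hc.2⟩⟩

/-- For real `k` with `k < −4` or `k > 2`, the cubic
`f(x) = 4x³ + (k² − 4)x² − 2kx + 1` has three distinct real roots
`e₁ < e₂ < e₃`, with `|e₁| > 1`, `|e₂| < 1` and `|e₃| < 1`. -/
theorem cubic_three_real_roots (k : ℝ) (hk : k < -4 ∨ 2 < k) :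
    ∃ e₁ e₂ e₃ : ℝ, e₁ < e₂ ∧ e₂ < e₃ ∧
      (∀ x : ℝ, 4 * x ^ 3 + (k ^ 2 - 4) * x ^ 2 - 2 * k * x + 1 =
        4 * (x - e₁) * (x - e₂) * (x - e₃)) ∧
      1 < |e₁| ∧ |e₂| < 1 ∧ |e₃| < 1 :=
  cubic_three_real_roots_general k (by rcases hk with h | h <;> nlinarith)
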